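/- Let a > 1 and let g_a(z) = \sum_{k=0}^\infty z^k a^{-k^2} be the partial theta-function, which is an entire function of order zero with positive coefficients. Then all complex zeros of g_a are real (equivalently, g_a belongs to the Laguerre–Pólya class) if and only if there exists x_0 \in (-a^3, -a) such that g_a(x_0) \le 0. -/

import Mathlib

/-!
Write `q = a⁻¹`, so that `g_a(z) = ∑ q ^ (k ^ 2) * z ^ k`.

Suppose `g_a(x₀) ≤ 0` with `-a ^ 3 < x₀ < -a`. Then `3 ≤ a ^ 2`, and this makes one term dominate
every section of even length at each point `-a ^ (2 * j)`, except at the second and the last but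
one. There `x₀` and its image under the self-reciprocity of the section take over. So the section
alternates in sign often enough to have only real roots. A polynomial `P` with only real roots
satisfies `|P(u + iw)| ≤ |P(u + iv)|` for `|w| ≤ |v|`. This passes to the limit, where a nonreal
zero would produce a whole segment of zeros.

Conversely, let all zeros be real and `g_a > 0` on `(-a ^ 3, -a)`. Then `g_a > 0` to the right of
some `-r < -a ^ 3`. Since `g_a` is of minimal exponential type, it is a limit of products
`∏ (1 + u z)` over finite families of reals with `0 < u ≤ 1 / r`, for which the power sums satisfy
`r * p₂ ≤ p₁` and `p₂ ^ 2 ≤ p₁ * p₃`. In terms of the Taylor coefficients, the second inequality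
says `3 ≤ a ^ 2`, and then the first one says `r ≤ a ^ 3`.
-/

namespace PartialTheta

open Filter Topology Polynomial Metric

section RealRooted

theorem le_card_roots_of_alternating {P : ℝ[X]} {n : ℕ} {x : ℕ → ℝ}
    (hx : StrictAntiOn x (Set.Iic n)) (hP : ∀ i ≤ n, 0 < (-1) ^ i * P.eval (x i)) :
    n ≤ P.roots.card := by
  have hP0 : P ≠ 0 := by
    rintro rfl
    simpa using hP 0 n.zero_le
  have exists_root (i : Fin n) : ∃ r ∈ Set.Ioo (x (i + 1)) (x i), P.IsRoot r := by
    have hlt : x (i + 1) < x i := hx i.2.le (Nat.succ_le_of_lt i.2) (Nat.lt_succ_self i)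
    have hcont : ContinuousOn (fun t => (-1) ^ (i : ℕ) * P.eval t)
        (Set.Icc (x (i + 1)) (x i)) := by fun_prop
    have hneg : (-1) ^ (i : ℕ) * P.eval (x (i + 1)) < 0 := by
      have := hP (i + 1) i.2
      rw [pow_succ] at this
      linarith
    obtain ⟨r, hr, hr0⟩ := intermediate_value_Ioo hlt.le hcont ⟨hneg, hP i i.2.le⟩
    exact ⟨r, hr, by simpa using hr0⟩
  choose r hr hroot using exists_root
  have hanti : StrictAnti r := fun i j hij =>
    calc r j < x j := (hr j).2
      _ ≤ x (i + 1) := hx.antitoneOn (Nat.succ_le_of_lt i.2) j.2.le hij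
      _ < r i := (hr i).1
  calc n = (Finset.univ.image r).card := by
        rw [Finset.card_image_of_injective _ hanti.injective, Finset.card_univ, Fintype.card_fin]
    _ ≤ P.roots.toFinset.card := by
        refine Finset.card_le_card fun t ht => ?_
        obtain ⟨i, -, rfl⟩ := Finset.mem_image.mp ht
        exact Multiset.mem_toFinset.mpr ((mem_roots hP0).mpr (hroot i))
    _ ≤ P.roots.card := P.roots.toFinset_card_le

theorem splits_of_alternating {P : ℝ[X]} {n : ℕ} {x : ℕ → ℝ} (hn : P.natDegree ≤ n)
    (hx : StrictAntiOn x (Set.Iic n)) (hP : ∀ i ≤ n, 0 < (-1) ^ i * P.eval (x i)) :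
    P.Splits :=
  splits_iff_card_roots.mpr
    (le_antisymm P.card_roots' (hn.trans (le_card_roots_of_alternating hx hP)))

theorem norm_aeval_le_norm_aeval_of_splits {P : ℝ[X]} (hP : P.Splits) (u : ℝ) {v w : ℝ}
    (h : |w| ≤ |v|) : ‖aeval (⟨u, w⟩ : ℂ) P‖ ≤ ‖aeval (⟨u, v⟩ : ℂ) P‖ := by
  have norm_sub_le (r : ℝ) : ‖(⟨u, w⟩ : ℂ) - r‖ ≤ ‖(⟨u, v⟩ : ℂ) - r‖ := by
    rw [Complex.norm_def, Complex.norm_def]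
    refine Real.sqrt_le_sqrt ?_
    simpa [Complex.normSq_apply, ← sq] using sq_le_sq.mpr h
  rw [hP.eq_prod_roots]
  simp only [map_mul, aeval_C, norm_mul]
  gcongr
  induction P.roots using Multiset.induction with
  | empty => simp
  | cons r s ih =>
    simp only [Multiset.map_cons, Multiset.prod_cons, map_mul, norm_mul, map_sub, aeval_X,
      aeval_C, Complex.coe_algebraMap]
    gcongr
    exact norm_sub_le r

theorem frequently_nhdsNE_ofReal {u v : ℝ} (hv : v ≠ 0) {p : ℂ → Prop}
    (hp : ∀ w : ℝ, |w| ≤ |v| → p ⟨u, w⟩) : ∃ᶠ z in 𝓝[≠] (u : ℂ), p z := by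
  have hline : Tendsto (fun w : ℝ => (⟨u, w⟩ : ℂ)) (𝓝[≠] 0) (𝓝[≠] (u : ℂ)) := by
    refine tendsto_nhdsWithin_iff.mpr ⟨?_, ?_⟩
    · have hcont : Continuous fun w : ℝ => (⟨u, w⟩ : ℂ) := by
        simp only [Complex.mk_eq_add_mul_I]
        fun_prop
      exact (hcont.tendsto 0).mono_left nhdsWithin_le_nhds
    · filter_upwards [self_mem_nhdsWithin] with w hw
      simpa [Complex.ext_iff] using hw
  refine hline.frequently (Eventually.frequently ?_)
  have hsmall : ∀ᶠ w : ℝ in 𝓝 0, |w| < |v| :=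
    continuous_abs.continuousAt.eventually_lt continuousAt_const (by simpa using hv)
  filter_upwards [hsmall.filter_mono nhdsWithin_le_nhds] with w hw
  exact hp w hw.le

theorem im_eq_zero_of_tendsto_aeval_of_splits {ι : Type*} {l : Filter ι} [l.NeBot]
    {P : ι → ℝ[X]} (hP : ∀ i, (P i).Splits) {f : ℂ → ℂ} (hf : Differentiable ℂ f) (hf0 : f ≠ 0)
    (hlim : ∀ z, Tendsto (fun i => aeval z (P i)) l (𝓝 (f z))) {z : ℂ} (hz : f z = 0) :
    z.im = 0 := by
  obtain ⟨u, v⟩ := z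
  by_contra hv
  have hzero (w : ℝ) (hw : |w| ≤ |v|) : f ⟨u, w⟩ = 0 := by
    have := le_of_tendsto_of_tendsto' (hlim ⟨u, w⟩).norm (hlim ⟨u, v⟩).norm
      fun i => norm_aeval_le_norm_aeval_of_splits (hP i) u hw
    rwa [hz, norm_zero, norm_le_zero_iff] at this
  have hanalytic : AnalyticOnNhd ℂ f Set.univ :=
    hf.differentiableOn.analyticOnNhd isOpen_univ
  exact hf0 (hanalytic.eq_of_frequently_eq analyticOnNhd_const
    (frequently_nhdsNE_ofReal hv hzero))

end RealRooted

section MinimalExponentialType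

/-- Functions of minimal exponential type, that is, of order at most one and of type zero if the
order is one. For such functions with value `1` at the origin the Hadamard product has no
exponential factor. -/
def IsOfMinimalExponentialType (f : ℂ → ℂ) : Prop :=
  ∀ ε > 0, ∃ C : ℝ, ∀ z, ‖f z‖ ≤ C * Real.exp (ε * ‖z‖)

/-- The polynomial `∏ u ∈ s, (1 + u X)` with constant coefficient `1` and roots `-u⁻¹`, a partial
Hadamard product. Parametrizing by the negated inverses of the roots makes its coefficients
the elementary symmetric functions of `s`. -/
noncomputable def prodOneAddMulX {R : Type*} [CommSemiring R] (s : Multiset R) : R[X] :=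
  (s.map fun u => 1 + C u * X).prod

@[simp]
theorem prodOneAddMulX_zero {R : Type*} [CommSemiring R] :
    prodOneAddMulX (0 : Multiset R) = 1 := by
  simp [prodOneAddMulX]

@[simp]
theorem prodOneAddMulX_cons {R : Type*} [CommSemiring R] (u : R) (s : Multiset R) :
    prodOneAddMulX (u ::ₘ s) = (1 + C u * X) * prodOneAddMulX s := by
  simp [prodOneAddMulX]

theorem map_prodOneAddMulX {R S : Type*} [CommSemiring R] [CommSemiring S] (φ : R →+* S)
    (s : Multiset R) : (prodOneAddMulX s).map φ = prodOneAddMulX (s.map φ) := by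
  simp [prodOneAddMulX, Polynomial.map_multiset_prod]

theorem eval_zero_prodOneAddMulX {R : Type*} [CommSemiring R] (s : Multiset R) :
    (prodOneAddMulX s).eval 0 = 1 := by
  simp [prodOneAddMulX, eval_multiset_prod]

theorem norm_le_of_forall_norm_eq {f : ℂ → ℂ} (hf : Differentiable ℂ f) {R M : ℝ} (hR : 0 < R)
    (hM : ∀ z, ‖z‖ = R → ‖f z‖ ≤ M) {z : ℂ} (hz : ‖z‖ ≤ R) : ‖f z‖ ≤ M := by
  refine Complex.norm_le_of_forall_mem_frontier_norm_le (U := ball 0 R) isBounded_ball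
    hf.diffContOnCl (fun w hw => hM w ?_) ?_
  · simpa [frontier_ball _ hR.ne'] using hw
  · simpa [closure_ball _ hR.ne'] using hz

theorem exists_eq_one_add_mul_mul {f : ℂ → ℂ} (hf : Differentiable ℂ f) {w : ℂ} (hw : w ≠ 0)
    (hfw : f w = 0) :
    ∃ g : ℂ → ℂ, Differentiable ℂ g ∧ ∀ z, f z = (1 + -w⁻¹ * z) * g z := by
  have hslope : Differentiable ℂ (dslope f w) :=
    differentiableOn_univ.mp
      ((Complex.differentiableOn_dslope univ_mem).mpr hf.differentiableOn)
  refine ⟨fun z => -w * dslope f w z, hslope.const_mul _, fun z => ?_⟩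
  have hsub : (z - w) * dslope f w z = f z := by
    simpa [hfw] using sub_smul_dslope f w z
  rw [← hsub]
  field_simp
  ring

theorem two_le_norm_one_add_neg_inv_mul {w z : ℂ} {ρ : ℝ} (hw : w ≠ 0) (hwρ : ‖w‖ ≤ ρ)
    (hz : ‖z‖ = 3 * ρ) : 2 ≤ ‖1 + -w⁻¹ * z‖ := by
  have hquot : 3 ≤ ‖w⁻¹ * z‖ := by
    rw [norm_mul, norm_inv, hz, ← div_eq_inv_mul, le_div_iff₀ (norm_pos_iff.mpr hw)]
    linarith
  have htri : ‖w⁻¹ * z‖ - ‖(1 : ℂ)‖ ≤ ‖1 + -w⁻¹ * z‖ := by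
    rw [neg_mul, ← sub_eq_add_neg, norm_sub_rev]
    exact norm_sub_norm_le _ _
  rw [norm_one] at htri
  linarith

-- Each zero that is divided out halves the bound on the circle of radius `3 * ρ`, so by the
-- maximum principle at most `n` zeros lie in the disc of radius `ρ`.
theorem exists_eq_prodOneAddMulX_mul {ρ : ℝ} (hρ : 0 < ρ) {n : ℕ} {f : ℂ → ℂ}
    (hf : Differentiable ℂ f) (hf0 : f 0 = 1) {M : ℝ} (hM : ∀ z, ‖z‖ = 3 * ρ → ‖f z‖ ≤ M)
    (hn : M < 2 ^ n) :
    ∃ (s : Multiset ℂ) (g : ℂ → ℂ), (∀ u ∈ s, f (-u⁻¹) = 0) ∧ Differentiable ℂ g ∧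
      (∀ z, f z = (prodOneAddMulX s).eval z * g z) ∧ (∀ z, ‖z‖ ≤ ρ → g z ≠ 0) ∧
      ∀ z, ‖z‖ ≤ 3 * ρ → ‖g z‖ ≤ M := by
  have hbound (z : ℂ) (hz : ‖z‖ ≤ 3 * ρ) : ‖f z‖ ≤ M :=
    norm_le_of_forall_norm_eq hf (by positivity) hM hz
  have hM1 : 1 ≤ M := by simpa [hf0] using hbound 0 (by simpa using hρ.le)
  induction n generalizing f M with
  | zero => simp at hn; linarith
  | succ n ih =>
    by_cases hzero : ∃ w, ‖w‖ ≤ ρ ∧ f w = 0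
    · obtain ⟨w, hwρ, hfw⟩ := hzero
      have hw : w ≠ 0 := by rintro rfl; simp [hf0] at hfw
      obtain ⟨g, hg, hfg⟩ := exists_eq_one_add_mul_mul hf hw hfw
      have hgM (z : ℂ) (hz : ‖z‖ = 3 * ρ) : ‖g z‖ ≤ M / 2 := by
        have := hM z hz
        rw [hfg, norm_mul] at this
        have := mul_le_mul_of_nonneg_right (two_le_norm_one_add_neg_inv_mul hw hwρ hz)
          (norm_nonneg (g z))
        linarith
      have hg0 : g 0 = 1 := by simpa [hf0] using (hfg 0).symm
      have hg_bound (z : ℂ) (hz : ‖z‖ ≤ 3 * ρ) : ‖g z‖ ≤ M / 2 :=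
        norm_le_of_forall_norm_eq hg (by positivity) hgM hz
      obtain ⟨s, G, hs, hG, hgG, hne, hGM⟩ := ih hg hg0 hgM (by rw [pow_succ] at hn; linarith)
        hg_bound (by simpa [hg0] using hg_bound 0 (by simpa using hρ.le))
      refine ⟨-w⁻¹ ::ₘ s, G, ?_, hG, fun z => ?_, hne, fun z hz => ?_⟩
      · intro u hu
        obtain rfl | hu := Multiset.mem_cons.mp hu
        · simpa [inv_neg] using hfw
        · rw [hfg, hs u hu, mul_zero]
      · rw [hfg, hgG]
        simp [mul_assoc]
      · exact (hGM z hz).trans (by linarith)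
    · push Not at hzero
      exact ⟨0, f, by simp, hf, by simp, hzero, hbound⟩

theorem exists_eq_exp_of_ne_zero {f : ℂ → ℂ} {ρ : ℝ} (hρ : 0 < ρ)
    (hf : DifferentiableOn ℂ f (ball 0 ρ)) (hf0 : f 0 = 1) (hne : ∀ z ∈ ball 0 ρ, f z ≠ 0) :
    ∃ h : ℂ → ℂ, DifferentiableOn ℂ h (ball 0 ρ) ∧ h 0 = 0 ∧
      ∀ z ∈ ball 0 ρ, f z = Complex.exp (h z) := by
  have hlogDeriv : DifferentiableOn ℂ (fun z => deriv f z / f z) (ball 0 ρ) :=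
    (hf.deriv isOpen_ball).div hf hne
  obtain ⟨h, h0, hderiv⟩ := hlogDeriv.isExactOn_ball.with_val_at 0 0
  refine ⟨h, fun z hz => (hderiv z hz).differentiableAt.differentiableWithinAt, h0,
    fun z hz => ?_⟩
  have hquot (w : ℂ) (hw : w ∈ ball 0 ρ) :
      HasDerivAt (fun w => f w * Complex.exp (-h w)) 0 w := by
    have hfw : HasDerivAt f (deriv f w) w :=
      (hf.differentiableAt (isOpen_ball.mem_nhds hw)).hasDerivAt
    refine (hfw.fun_mul (hderiv w hw).fun_neg.cexp).congr_deriv ?_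
    field_simp [hne w hw]
    ring
  have hconst : f z * Complex.exp (-h z) = f 0 * Complex.exp (-h 0) :=
    isOpen_ball.is_const_of_deriv_eq_zero (convex_ball 0 ρ).isPreconnected
      (fun w hw => (hquot w hw).differentiableAt.differentiableWithinAt)
      (fun w hw => (hquot w hw).deriv) hz (mem_ball_self hρ)
  rw [hf0, h0, neg_zero, Complex.exp_zero, one_mul, Complex.exp_neg] at hconst
  exact eq_of_mul_inv_eq_one hconst

theorem exists_eq_exp_norm_le {f : ℂ → ℂ} {ρ M : ℝ} (hf : DifferentiableOn ℂ f (ball 0 ρ))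
    (hf0 : f 0 = 1) (hne : ∀ z ∈ ball 0 ρ, f z ≠ 0) (hM1 : 1 < M)
    (hM : ∀ z ∈ ball 0 ρ, ‖f z‖ ≤ M) {z : ℂ} (hz : z ∈ ball 0 ρ) :
    ∃ h : ℂ, f z = Complex.exp h ∧ ‖h‖ ≤ 2 * Real.log M * ‖z‖ / (ρ - ‖z‖) := by
  have hρ : 0 < ρ := pos_of_mem_ball hz
  obtain ⟨h, hdiff, h0, hexp⟩ := exists_eq_exp_of_ne_zero hρ hf hf0 hne
  refine ⟨h z, hexp z hz, Complex.borelCaratheodory_zero (Real.log_pos hM1) hdiff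
    (fun w hw => ?_) hρ hz h0⟩
  rw [Set.mem_ofPred_eq, Real.le_log_iff_exp_le (by positivity), ← Complex.norm_exp, ← hexp w hw]
  exact hM w hw

theorem exists_eq_prodOneAddMulX_mul_exp {f : ℂ → ℂ} (hf : Differentiable ℂ f) (hf0 : f 0 = 1)
    (htype : IsOfMinimalExponentialType f) {η : ℝ} (hη : 0 < η) :
    ∃ s : Multiset ℂ, (∀ u ∈ s, f (-u⁻¹) = 0) ∧ ∀ z, ‖z‖ ≤ 1 →
      ∃ h : ℂ, f z = (prodOneAddMulX s).eval z * Complex.exp h ∧ ‖h‖ ≤ η := by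
  obtain ⟨C, hC⟩ := htype (η / 12) (by positivity)
  have hC1 : 1 ≤ C := by simpa [hf0] using hC 0
  have hlogC : 0 ≤ Real.log C := Real.log_nonneg hC1
  obtain ⟨ρ, hρ⟩ : ∃ ρ : ℝ, η * ρ = 4 * Real.log C + 3 * η :=
    ⟨4 * Real.log C / η + 3, by field_simp⟩
  have hρ3 : 3 ≤ ρ := by nlinarith
  set M := C * Real.exp (η / 12 * (3 * ρ))
  have hM1 : 1 < M := one_lt_mul_of_le_of_lt hC1 (Real.one_lt_exp_iff.mpr (by positivity))
  have hlogM : Real.log M = Real.log C + η / 4 * ρ := by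
    rw [Real.log_mul (by positivity) (Real.exp_ne_zero _), Real.log_exp]
    ring
  have hfM (z : ℂ) (hz : ‖z‖ = 3 * ρ) : ‖f z‖ ≤ M := by
    simpa only [hz] using hC z
  obtain ⟨n, hn⟩ := pow_unbounded_of_one_lt M (one_lt_two (α := ℝ))
  obtain ⟨s, g, hs, hg, hfg, hne, hgM⟩ :=
    exists_eq_prodOneAddMulX_mul (by positivity) hf hf0 hfM hn
  have hg0 : g 0 = 1 := by simpa [hf0, eval_zero_prodOneAddMulX] using (hfg 0).symm
  refine ⟨s, hs, fun z hz => ?_⟩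
  have norm_le {w : ℂ} (hw : w ∈ ball 0 ρ) : ‖w‖ ≤ ρ := (mem_ball_zero_iff.mp hw).le
  obtain ⟨h, hgh, hh⟩ := exists_eq_exp_norm_le hg.differentiableOn hg0
    (fun w hw => hne w (norm_le hw)) hM1 (fun w hw => hgM w (by linarith [norm_le hw]))
    (mem_ball_zero_iff.mpr (by linarith : ‖z‖ < ρ))
  refine ⟨h, by rw [hfg, hgh], hh.trans ?_⟩
  calc 2 * Real.log M * ‖z‖ / (ρ - ‖z‖) ≤ 2 * Real.log M * 1 / (ρ - 1) := by
        have := Real.log_pos hM1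
        gcongr
        linarith
    _ ≤ η := by
        rw [div_le_iff₀ (by linarith), hlogM]
        linarith

theorem exists_tendstoUniformlyOn_prodOneAddMulX {f : ℂ → ℂ} (hf : Differentiable ℂ f)
    (hf0 : f 0 = 1) (htype : IsOfMinimalExponentialType f) :
    ∃ s : ℕ → Multiset ℂ, (∀ n, ∀ u ∈ s n, f (-u⁻¹) = 0) ∧
      TendstoUniformlyOn (fun n z => (prodOneAddMulX (s n)).eval z) f atTop (closedBall 0 1) := by
  choose s hs hexp using fun n : ℕ =>
    exists_eq_prodOneAddMulX_mul_exp hf hf0 htype (Nat.one_div_pos_of_nat (α := ℝ) (n := n))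
  obtain ⟨K, hK⟩ := (isCompact_closedBall (0 : ℂ) 1).exists_bound_of_continuousOn
    hf.continuous.continuousOn
  have hK0 : 0 ≤ K := (norm_nonneg _).trans (hK 0 (by simp))
  refine ⟨s, hs, tendstoUniformlyOn_iff.mpr fun δ hδ => ?_⟩
  have hsmall : ∀ᶠ n : ℕ in atTop, K * (2 * (1 / ((n : ℝ) + 1))) < δ := by
    have := (tendsto_one_div_add_atTop_nhds_zero_nat (𝕜 := ℝ)).const_mul 2 |>.const_mul K
    exact this.eventually_lt_const (by simpa using hδ)
  filter_upwards [hsmall] with n hn z hz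
  obtain ⟨h, hfz, hh⟩ := hexp n z (by simpa using hz)
  have hh1 : ‖-h‖ ≤ 1 := by
    rw [norm_neg]
    exact hh.trans (div_le_one_of_le₀ (by simp) (by positivity))
  rw [dist_eq_norm]
  calc ‖f z - (prodOneAddMulX (s n)).eval z‖ = ‖f z * (Complex.exp (-h) - 1)‖ := by
        rw [norm_sub_rev, mul_sub, mul_one]
        nth_rw 2 [hfz]
        rw [mul_assoc, ← Complex.exp_add, add_neg_cancel, Complex.exp_zero, mul_one]
    _ ≤ K * (2 * ‖-h‖) := by
        rw [norm_mul]
        exact mul_le_mul (hK z hz) (Complex.norm_exp_sub_one_le hh1) (norm_nonneg _) hK0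
    _ ≤ K * (2 * (1 / ((n : ℝ) + 1))) := by
        rw [norm_neg]
        gcongr
    _ < δ := hn

end MinimalExponentialType

section TaylorCoefficients

theorem tendsto_coeff_of_tendstoLocallyUniformlyOn {ι : Type*} {l : Filter ι} {P : ι → ℂ[X]}
    {f : ℂ → ℂ} {U : Set ℂ} (hU : IsOpen U) (h0 : 0 ∈ U)
    (h : TendstoLocallyUniformlyOn (fun i z => (P i).eval z) f l U) (k : ℕ) :
    Tendsto (fun i => (P i).coeff k) l (𝓝 (iteratedDeriv k f 0 / k.factorial)) := by
  induction k generalizing P f with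
  | zero => simpa [coeff_zero_eq_eval_zero] using h.tendsto_at h0
  | succ k ih =>
    have hderiv :
        TendstoLocallyUniformlyOn (fun i z => (P i).derivative.eval z) (deriv f) l U := by
      refine (h.deriv (.of_forall fun i => (P i).differentiable.differentiableOn) hU).congr
        fun i z _ => ?_
      exact (P i).deriv
    have hdiv := (ih hderiv).div_const ((k + 1 : ℕ) : ℂ)
    rw [← iteratedDeriv_succ', div_div, ← Nat.cast_mul, mul_comm k.factorial,
      ← Nat.factorial_succ] at hdiv
    refine hdiv.congr fun i => ?_
    rw [coeff_derivative, ← Nat.cast_add_one,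
      mul_div_cancel_right₀ _ (Nat.cast_ne_zero.mpr k.succ_ne_zero)]

theorem exists_tendsto_coeff_prodOneAddMulX {f : ℂ → ℂ} (hf : Differentiable ℂ f)
    (hf0 : f 0 = 1) (htype : IsOfMinimalExponentialType f) (hreal : ∀ z, f z = 0 → z.im = 0)
    {c : ℕ → ℝ} (hc : ∀ k, iteratedDeriv k f 0 / k.factorial = c k) :
    ∃ s : ℕ → Multiset ℝ, (∀ n, ∀ u ∈ s n, f (-u⁻¹ : ℝ) = 0) ∧
      ∀ k, Tendsto (fun n => (prodOneAddMulX (s n)).coeff k) atTop (𝓝 (c k)) := by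
  obtain ⟨s, hs, hunif⟩ := exists_tendstoUniformlyOn_prodOneAddMulX hf hf0 htype
  have him (n : ℕ) : ∀ u ∈ s n, u.im = 0 := fun u hu => by
    have := hreal _ (hs n u hu)
    rw [← inv_neg, Complex.inv_im, div_eq_zero_iff, Complex.normSq_eq_zero] at this
    obtain h | h := this
    · simpa using h
    · rw [neg_eq_zero.mp h, Complex.zero_im]
  choose t ht using fun n => CanLift.prf (β := Multiset ℝ) (s n) fun u hu => him n u hu
  refine ⟨t, fun n u hu => ?_, fun k => ?_⟩
  · have := hs n u (ht n ▸ Multiset.mem_map_of_mem _ hu)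
    simpa using this
  · have hlocal := (hunif.mono ball_subset_closedBall).tendstoLocallyUniformlyOn
    have hcoeff := tendsto_coeff_of_tendstoLocallyUniformlyOn isOpen_ball
      (mem_ball_self one_pos) hlocal k
    rw [hc] at hcoeff
    refine tendsto_ofReal_iff.mp (hcoeff.congr fun n => ?_)
    rw [← ht n]
    exact (congrArg (coeff · k) (map_prodOneAddMulX Complex.ofRealHom (t n))).symm.trans
      (coeff_map _ _)

end TaylorCoefficients

section PowerSums

section Newton

variable {R : Type*} [CommRing R] (s : Multiset R)

theorem coeff_zero_prodOneAddMulX : (prodOneAddMulX s).coeff 0 = 1 := by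
  rw [coeff_zero_eq_eval_zero, eval_zero_prodOneAddMulX]

theorem coeff_succ_prodOneAddMulX_cons (u : R) (k : ℕ) :
    (prodOneAddMulX (u ::ₘ s)).coeff (k + 1) =
      (prodOneAddMulX s).coeff (k + 1) + u * (prodOneAddMulX s).coeff k := by
  rw [prodOneAddMulX_cons, add_mul, one_mul, coeff_add, mul_assoc, coeff_C_mul, coeff_X_mul]

theorem sum_eq_coeff_one_prodOneAddMulX : s.sum = (prodOneAddMulX s).coeff 1 := by
  induction s using Multiset.induction with
  | empty => simp [coeff_one]
  | cons u s ih =>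
    rw [Multiset.sum_cons, ih, coeff_succ_prodOneAddMulX_cons, coeff_zero_prodOneAddMulX]
    ring

theorem sum_map_sq_eq_coeff_prodOneAddMulX :
    (s.map (· ^ 2)).sum =
      (prodOneAddMulX s).coeff 1 ^ 2 - 2 * (prodOneAddMulX s).coeff 2 := by
  induction s using Multiset.induction with
  | empty => simp [coeff_one]
  | cons u s ih =>
    simp only [Multiset.map_cons, Multiset.sum_cons, ih, coeff_succ_prodOneAddMulX_cons,
      coeff_zero_prodOneAddMulX]
    ring

theorem sum_map_pow_three_eq_coeff_prodOneAddMulX :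
    (s.map (· ^ 3)).sum =
      (prodOneAddMulX s).coeff 1 ^ 3
        - 3 * (prodOneAddMulX s).coeff 1 * (prodOneAddMulX s).coeff 2
        + 3 * (prodOneAddMulX s).coeff 3 := by
  induction s using Multiset.induction with
  | empty => simp [coeff_one]
  | cons u s ih =>
    simp only [Multiset.map_cons, Multiset.sum_cons, ih, coeff_succ_prodOneAddMulX_cons,
      coeff_zero_prodOneAddMulX]
    ring

end Newton

variable {R : Type*} [CommRing R] [LinearOrder R] [IsStrictOrderedRing R] {s : Multiset R}

theorem mul_sum_map_sq_le_sum {r : R} (hs : ∀ u ∈ s, 0 ≤ u ∧ r * u ≤ 1) :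
    r * (s.map (· ^ 2)).sum ≤ s.sum := by
  rw [← Multiset.sum_map_mul_left]
  conv_rhs => rw [← s.map_id']
  refine Multiset.sum_map_le_sum_map _ _ fun u hu => ?_
  calc r * u ^ 2 = r * u * u := by ring
    _ ≤ u := mul_le_of_le_one_left (hs u hu).1 (hs u hu).2

theorem sq_sum_map_sq_le (hs : ∀ u ∈ s, 0 ≤ u) :
    (s.map (· ^ 2)).sum ^ 2 ≤ s.sum * (s.map (· ^ 3)).sum := by
  rw [Finset.sum_multiset_map_count, Finset.sum_multiset_map_count, Finset.sum_multiset_count]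
  apply Finset.sum_sq_le_sum_mul_sum_of_sq_le_mul <;> intro u hu
  · exact nsmul_nonneg (hs u (Multiset.mem_toFinset.mp hu)) _
  · exact nsmul_nonneg (pow_nonneg (hs u (Multiset.mem_toFinset.mp hu)) 3) _
  · simp only [nsmul_eq_mul]
    exact le_of_eq (by ring)

end PowerSums

theorem powerSum_inequalities_of_zeros_le {f : ℂ → ℂ} (hf : Differentiable ℂ f) (hf0 : f 0 = 1)
    (htype : IsOfMinimalExponentialType f) {r : ℝ} (hr : 0 < r)
    (hzeros : ∀ z, f z = 0 → z.im = 0 ∧ z.re ≤ -r)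
    {c : ℕ → ℝ} (hc : ∀ k, iteratedDeriv k f 0 / k.factorial = c k) :
    r * (c 1 ^ 2 - 2 * c 2) ≤ c 1 ∧
      (c 1 ^ 2 - 2 * c 2) ^ 2 ≤ c 1 * (c 1 ^ 3 - 3 * c 1 * c 2 + 3 * c 3) := by
  obtain ⟨s, hs, hlim⟩ :=
    exists_tendsto_coeff_prodOneAddMulX hf hf0 htype (fun z hz => (hzeros z hz).1) hc
  have hbound (n : ℕ) (u : ℝ) (hu : u ∈ s n) : 0 ≤ u ∧ r * u ≤ 1 := by
    have hu_inv : r ≤ u⁻¹ := by simpa using (hzeros _ (hs n u hu)).2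
    have hu_pos : 0 < u := inv_pos.mp (hr.trans_le hu_inv)
    exact ⟨hu_pos.le, (mul_le_mul_of_nonneg_right hu_inv hu_pos.le).trans_eq
      (inv_mul_cancel₀ hu_pos.ne')⟩
  have hlim_sq := ((hlim 1).pow 2).sub ((hlim 2).const_mul 2)
  have hlim_cube := ((hlim 1).pow 3).sub (((hlim 1).const_mul 3).mul (hlim 2)) |>.add
    ((hlim 3).const_mul 3)
  refine ⟨le_of_tendsto_of_tendsto' (hlim_sq.const_mul r) (hlim 1) fun n => ?_,
    le_of_tendsto_of_tendsto' (hlim_sq.pow 2) ((hlim 1).mul hlim_cube) fun n => ?_⟩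
  · rw [← sum_map_sq_eq_coeff_prodOneAddMulX, ← sum_eq_coeff_one_prodOneAddMulX]
    exact mul_sum_map_sq_le_sum (hbound n)
  · rw [← sum_map_sq_eq_coeff_prodOneAddMulX, ← sum_map_pow_three_eq_coeff_prodOneAddMulX,
      ← sum_eq_coeff_one_prodOneAddMulX]
    exact sq_sum_map_sq_le fun u hu => (hbound n u hu).1

section Basic

/-- The partial theta function `∑ q ^ (k ^ 2) * z ^ k`, that is, the function `g_a` of the theorem
in terms of the parameter `q = a⁻¹`. -/
noncomputable def partialTheta {𝕜 : Type*} [NormedField 𝕜] (q z : 𝕜) : 𝕜 :=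
  ∑' k : ℕ, q ^ (k ^ 2) * z ^ k

/-- The section `∑ k < n, q ^ (k ^ 2) * X ^ k` of the power series `partialTheta q`; it has `n`
terms and hence degree at most `n - 1`. -/
noncomputable def partialThetaSection {R : Type*} [CommSemiring R] (q : R) (n : ℕ) : R[X] :=
  ∑ k ∈ Finset.range n, C (q ^ (k ^ 2)) * X ^ k

theorem tsum_zpow_neg_sq_mul_pow {𝕜 : Type*} [NormedField 𝕜] (a z : 𝕜) :
    ∑' k : ℕ, a ^ (-(k ^ 2 : ℤ)) * z ^ k = partialTheta a⁻¹ z := by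
  refine tsum_congr fun k => ?_
  rw [zpow_neg, inv_pow]
  norm_cast

theorem pow_sq_le_const_mul_pow_div_factorial {r : ℝ} (h0 : 0 ≤ r) (h1 : r < 1) {ε : ℝ}
    (hε : 0 < ε) : ∃ C : ℝ, ∀ k : ℕ, r ^ (k ^ 2) ≤ C * (ε ^ k / k.factorial) := by
  have hev : ∀ᶠ k : ℕ in atTop, k.factorial * r ^ (k ^ 2) / ε ^ k ≤ 1 := by
    filter_upwards [(tendsto_self_mul_const_pow_of_lt_one h0 h1).eventually_lt_const hε]
      with k hk
    rw [div_le_one (by positivity)]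
    calc (k.factorial : ℝ) * r ^ (k ^ 2) ≤ (k : ℝ) ^ k * r ^ (k ^ 2) := by
          gcongr
          exact_mod_cast Nat.factorial_le_pow k
      _ = (k * r ^ k) ^ k := by rw [mul_pow, ← pow_mul, sq]
      _ ≤ ε ^ k := by gcongr
  obtain ⟨C, hC⟩ := (isBoundedUnder_of_eventually_le hev).bddAbove_range
  refine ⟨C, fun k => ?_⟩
  have hk : k.factorial * r ^ (k ^ 2) / ε ^ k ≤ C := hC ⟨k, rfl⟩
  rw [div_le_iff₀ (by positivity)] at hk
  rw [← mul_div_assoc, le_div_iff₀ (by positivity)]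
  linarith

variable {𝕜 : Type*} [NontriviallyNormedField 𝕜] {q : 𝕜}

theorem norm_pow_sq_mul_pow_le (hq : ‖q‖ < 1) {ε : ℝ} (hε : 0 < ε) :
    ∃ C : ℝ, ∀ (z : 𝕜) (k : ℕ), ‖q ^ (k ^ 2) * z ^ k‖ ≤ C * ((ε * ‖z‖) ^ k / k.factorial) := by
  obtain ⟨C, hC⟩ := pow_sq_le_const_mul_pow_div_factorial (norm_nonneg q) hq hε
  refine ⟨C, fun z k => ?_⟩
  calc ‖q ^ (k ^ 2) * z ^ k‖ = ‖q‖ ^ (k ^ 2) * ‖z‖ ^ k := by rw [norm_mul, norm_pow, norm_pow]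
    _ ≤ C * (ε ^ k / k.factorial) * ‖z‖ ^ k := by gcongr; exact hC k
    _ = C * ((ε * ‖z‖) ^ k / k.factorial) := by rw [mul_pow]; ring

theorem summable_norm_pow_sq_mul_pow (hq : ‖q‖ < 1) (z : 𝕜) :
    Summable fun k : ℕ => ‖q ^ (k ^ 2) * z ^ k‖ := by
  obtain ⟨C, hC⟩ := norm_pow_sq_mul_pow_le hq one_pos
  exact .of_nonneg_of_le (fun _ => norm_nonneg _) (hC z)
    ((Real.summable_pow_div_factorial _).mul_left C)

theorem partialTheta_zero_right (q : 𝕜) : partialTheta q 0 = 1 := by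
  rw [partialTheta, tsum_eq_single 0 fun k hk => by simp [hk]]
  simp

theorem norm_partialTheta_le (hq : ‖q‖ < 1) {ε : ℝ} (hε : 0 < ε) :
    ∃ C : ℝ, ∀ z : 𝕜, ‖partialTheta q z‖ ≤ C * Real.exp (ε * ‖z‖) := by
  obtain ⟨C, hC⟩ := norm_pow_sq_mul_pow_le hq hε
  refine ⟨C, fun z => tsum_of_norm_bounded ?_ (hC z)⟩
  rw [Real.exp_eq_exp_ℝ]
  exact (NormedSpace.expSeries_div_hasSum_exp (ε * ‖z‖)).mul_left C

theorem partialTheta_ofReal (q x : ℝ) :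
    partialTheta (q : ℂ) (x : ℂ) = (partialTheta q x : ℝ) := by
  simp only [partialTheta, Complex.ofReal_tsum]
  norm_cast

theorem eval_partialThetaSection {R : Type*} [CommSemiring R] (q x : R) (n : ℕ) :
    (partialThetaSection q n).eval x = ∑ k ∈ Finset.range n, q ^ (k ^ 2) * x ^ k := by
  simp [partialThetaSection, eval_finsetSum]

theorem natDegree_partialThetaSection_succ_le {R : Type*} [CommSemiring R] (q : R) (n : ℕ) :
    (partialThetaSection q (n + 1)).natDegree ≤ n :=
  natDegree_sum_le_of_forall_le _ _ fun _ hk =>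
    (natDegree_C_mul_X_pow_le _ _).trans (Finset.mem_range_succ_iff.mp hk)

theorem aeval_partialThetaSection (q : ℝ) (n : ℕ) (z : ℂ) :
    aeval z (partialThetaSection q n) = (partialThetaSection (q : ℂ) n).eval z := by
  simp [partialThetaSection, eval_finsetSum]

variable [CompleteSpace 𝕜]

theorem hasSum_partialTheta (hq : ‖q‖ < 1) (z : 𝕜) :
    HasSum (fun k : ℕ => q ^ (k ^ 2) * z ^ k) (partialTheta q z) :=
  (summable_norm_pow_sq_mul_pow hq z).of_norm.hasSum

theorem tendsto_eval_partialThetaSection (hq : ‖q‖ < 1) (z : 𝕜) :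
    Tendsto (fun n => (partialThetaSection q n).eval z) atTop (𝓝 (partialTheta q z)) := by
  simpa only [eval_partialThetaSection] using (hasSum_partialTheta hq z).tendsto_sum_nat

theorem hasFPowerSeriesOnBall_partialTheta (hq : ‖q‖ < 1) :
    HasFPowerSeriesOnBall (partialTheta q)
      (FormalMultilinearSeries.ofScalars 𝕜 fun k : ℕ => q ^ (k ^ 2)) 0 ⊤ := by
  set p := FormalMultilinearSeries.ofScalars 𝕜 fun k : ℕ => q ^ (k ^ 2)
  have hradius : p.radius = ⊤ := by
    refine p.radius_eq_top_of_summable_norm fun r => ?_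
    simpa [p, FormalMultilinearSeries.ofScalars_norm] using
      summable_norm_pow_sq_mul_pow (q := ‖q‖) (by simpa using hq) (r : ℝ)
  refine ⟨hradius.ge, ENNReal.zero_lt_top, fun {z} _ => ?_⟩
  simpa [p, FormalMultilinearSeries.ofScalars_apply_eq, mul_comm] using hasSum_partialTheta hq z

theorem differentiable_partialTheta (hq : ‖q‖ < 1) : Differentiable 𝕜 (partialTheta q) := by
  simpa [differentiableOn_univ] using (hasFPowerSeriesOnBall_partialTheta hq).differentiableOn

theorem iteratedDeriv_partialTheta_zero (hq : ‖q‖ < 1) (k : ℕ) :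
    iteratedDeriv k (partialTheta q) 0 = k.factorial * q ^ (k ^ 2) := by
  rw [iteratedDeriv_eq_iteratedFDeriv,
    ← (hasFPowerSeriesOnBall_partialTheta hq).factorial_smul 1 k,
    FormalMultilinearSeries.ofScalars_apply_eq]
  simp

theorem partialTheta_pos_of_nonneg {q x : ℝ} (h0 : 0 < q) (h1 : q < 1) (hx : 0 ≤ x) :
    0 < partialTheta q x := by
  have hsum := hasSum_partialTheta (by rwa [Real.norm_of_nonneg h0.le]) x
  exact hsum.summable.tsum_pos (fun k => by positivity) 0 (by simp)

end Basic

section Sign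

variable {q y : ℝ}

theorem eval_partialThetaSection_neg_two_mul_succ {R : Type*} [CommRing R] (q y : R) (m : ℕ) :
    (partialThetaSection q (2 * (m + 1))).eval (-y) = (partialThetaSection q (2 * m)).eval (-y) +
      q ^ ((2 * m) ^ 2) * y ^ (2 * m) * (1 - q ^ (4 * m + 1) * y) := by
  have hpow : (-y) ^ (2 * m) = y ^ (2 * m) := (even_two_mul m).neg_pow y
  simp only [eval_partialThetaSection, mul_add_one, Finset.sum_range_succ]
  rw [pow_succ (-y), hpow]
  ring

theorem eval_partialThetaSection_lt_partialTheta (h0 : 0 < q) (h1 : q < 1) (hy : 0 < y) {k m : ℕ}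
    (hk : k ≤ 4 * m) (hqy : q ^ k * y ≤ 1) :
    (partialThetaSection q (2 * m)).eval (-y) < partialTheta q (-y) := by
  set s : ℕ → ℝ := fun j => (partialThetaSection q (2 * (m + j))).eval (-y)
  have hs : StrictMono s := strictMono_nat_of_lt_succ fun j => by
    have hlt : q ^ (4 * (m + j) + 1) * y < 1 := by
      refine lt_of_lt_of_le ?_ hqy
      gcongr ?_ * y
      exact pow_lt_pow_right_of_lt_one₀ h0 h1 (by omega)
    have := sub_pos.mpr hlt
    simp only [s, ← add_assoc, eval_partialThetaSection_neg_two_mul_succ, lt_add_iff_pos_right]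
    positivity
  have hlim : Tendsto s atTop (𝓝 (partialTheta q (-y))) :=
    (tendsto_eval_partialThetaSection (by rwa [Real.norm_of_nonneg h0.le]) (-y)).comp
      (tendsto_atTop_mono (fun j => by dsimp; omega) tendsto_id)
  exact (hs one_pos).trans_le (hs.monotone.ge_of_tendsto hlim 1)

theorem partialTheta_neg_pos_of_mul_le_one (h0 : 0 < q) (h1 : q < 1) (hy : 0 < y)
    (hqy : q * y ≤ 1) : 0 < partialTheta q (-y) := by
  have hlt := eval_partialThetaSection_lt_partialTheta h0 h1 hy (k := 1) (m := 1) (by norm_num)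
    (by rwa [pow_one])
  simp only [eval_partialThetaSection, Finset.sum_range_succ, Finset.sum_range_zero] at hlt
  norm_num at hlt
  linarith

theorem eval_partialThetaSection_four_neg {R : Type*} [CommRing R] (q y : R) :
    q ^ 2 * (partialThetaSection q 4).eval (-y) =
      (1 - q ^ 3 * y) * (q ^ 2 * (1 + q ^ 3 * y + (q ^ 3 * y) ^ 2) - q ^ 3 * y) := by
  simp only [eval_partialThetaSection, Finset.sum_range_succ, Finset.sum_range_zero]
  ring

theorem partialTheta_neg_pos_of_pow_three_mul_eq_one (h0 : 0 < q) (h1 : q < 1)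
    (hqy : q ^ 3 * y = 1) : 0 < partialTheta q (-y) := by
  have hy : 0 < y := pos_of_mul_pos_right (hqy ▸ one_pos) (by positivity)
  have hzero : (partialThetaSection q 4).eval (-y) = 0 := by
    have h := eval_partialThetaSection_four_neg q y
    rw [hqy, sub_self, zero_mul] at h
    exact (mul_eq_zero_iff_left (by positivity)).mp h
  exact hzero ▸ eval_partialThetaSection_lt_partialTheta h0 h1 hy (m := 2) (by norm_num) hqy.le

theorem three_mul_sq_le_one_of_partialTheta_neg_nonpos (h0 : 0 < q) (h1 : q < 1) (hy : 0 < y)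
    (hqy : q ^ 3 * y < 1) (hθ : partialTheta q (-y) ≤ 0) : 3 * q ^ 2 ≤ 1 := by
  have hneg : (partialThetaSection q 4).eval (-y) < 0 :=
    (eval_partialThetaSection_lt_partialTheta h0 h1 hy (m := 2) (by norm_num) hqy.le).trans_le hθ
  have hfactor := mul_neg_of_pos_of_neg (pow_pos h0 2) hneg
  rw [eval_partialThetaSection_four_neg] at hfactor
  set s := q ^ 3 * y
  have hs : 0 < s := by positivity
  have hlt : q ^ 2 * (1 + s + s ^ 2) - s < 0 := neg_of_mul_neg_right hfactor (by linarith)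
  have hamgm : q ^ 2 * (3 * s) ≤ q ^ 2 * (1 + s + s ^ 2) := by
    gcongr
    linarith [sq_nonneg (s - 1)]
  exact le_of_mul_le_mul_right (by linarith) hs

end Sign

section AlternatingThetaSum

theorem sum_range_neg_one_pow_mul_mem_Icc {R : Type*} [CommRing R] [LinearOrder R]
    [IsStrictOrderedRing R] {f : ℕ → R} (hf : Antitone f) (hf0 : ∀ i, 0 ≤ f i) (n : ℕ) :
    ∑ i ∈ Finset.range n, (-1) ^ i * f i ∈ Set.Icc 0 (f 0) := by
  induction n generalizing f with
  | zero => simpa using hf0 0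
  | succ n ih =>
    obtain ⟨hlow, hup⟩ := ih (hf.comp_monotone fun _ _ => Nat.succ_le_succ) fun i => hf0 (i + 1)
    have hsplit : ∑ i ∈ Finset.range (n + 1), (-1) ^ i * f i =
        f 0 - ∑ i ∈ Finset.range n, (-1) ^ i * (f ∘ Nat.succ) i := by
      simp [Finset.sum_range_succ', pow_succ, neg_add_eq_sub]
    have := hf zero_le_one
    rw [hsplit]
    exact ⟨by linarith [show (f ∘ Nat.succ) 0 = f 1 from rfl], by linarith⟩

/-- The alternating sum `-q + q ^ 4 - q ^ 9 + ⋯` of the first `n` powers `q ^ (k ^ 2)`, `1 ≤ k`.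
It collects the terms of a section of `partialTheta q` on one side of the dominant term at
`-q⁻¹ ^ (2 * j)`, normalized so that the dominant term is `1`. -/
def alternatingThetaSum {R : Type*} [Ring R] (q : R) (n : ℕ) : R :=
  ∑ i ∈ Finset.range n, (-1) ^ (i + 1) * q ^ ((i + 1) ^ 2)

variable {q : ℝ}

theorem le_alternatingThetaSum (h0 : 0 < q) (h1 : q < 1) {n : ℕ} (hn : n ≠ 1) :
    -q + q ^ 4 - q ^ 9 ≤ alternatingThetaSum q n := by
  match n with
  | 0 =>
    have hq4 : q ^ 4 ≤ q := pow_le_of_le_one h0.le h1.le (by norm_num)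
    have hq9 : 0 < q ^ 9 := by positivity
    rw [alternatingThetaSum, Finset.sum_range_zero]
    linarith
  | k + 2 =>
    have htail := (sum_range_neg_one_pow_mul_mem_Icc (f := fun i => q ^ ((i + 3) ^ 2))
      (fun i j hij => pow_le_pow_of_le_one h0.le h1.le (by gcongr)) (fun i => by positivity) k).2
    have hsplit : alternatingThetaSum q (k + 2) =
        -q + q ^ 4 - ∑ i ∈ Finset.range k, (-1) ^ i * q ^ ((i + 3) ^ 2) := by
      simp only [alternatingThetaSum, Finset.sum_range_succ', add_assoc, pow_add (-1 : ℝ)]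
      norm_num
      ring
    rw [hsplit]
    norm_num at htail
    linarith

theorem one_add_alternatingThetaSum_add_pos (h0 : 0 < q) (h3 : 3 * q ^ 2 ≤ 1) {j l : ℕ}
    (hj : j ≠ 1) (hl : l ≠ 1) :
    0 < 1 + alternatingThetaSum q j + alternatingThetaSum q l := by
  -- `0.5774` is slightly larger than `1 / √3`.
  have hq : q < 0.5774 := by nlinarith
  have hq9 : q ^ 9 ≤ 0.065 * q ^ 4 := by
    calc q ^ 9 = q ^ 5 * q ^ 4 := by ring
      _ ≤ 0.5774 ^ 5 * q ^ 4 := by gcongr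
      _ ≤ 0.065 * q ^ 4 := by gcongr; norm_num
  have hpos : 0 < 1 - 2 * q + 1.87 * q ^ 4 := by
    nlinarith [sq_nonneg (q ^ 2 - 1 / 3), sq_nonneg (q - 0.5774)]
  have h1 : q < 1 := by linarith
  linarith [le_alternatingThetaSum h0 h1 hj, le_alternatingThetaSum h0 h1 hl]

theorem partialThetaSection_term_at_inv_pow {K : Type*} [Field K] {q : K} (hq : q ≠ 0) {j k d : ℕ}
    (h : k + d = j ∨ j + d = k) :
    q ^ (j ^ 2) * ((-1) ^ j * (q ^ (k ^ 2) * (-q⁻¹ ^ (2 * j)) ^ k)) = (-1) ^ d * q ^ (d ^ 2) := by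
  have hsign : (-1 : K) ^ j * (-1) ^ k = (-1) ^ d := by
    rw [← pow_add, neg_one_pow_congr]
    rcases h with rfl | rfl <;> grind
  have hexp : j ^ 2 + k ^ 2 = d ^ 2 + 2 * j * k := by
    rcases h with rfl | rfl <;> ring
  have hpow : q ^ (j ^ 2) * q ^ (k ^ 2) * q⁻¹ ^ (2 * j * k) = q ^ (d ^ 2) := by
    rw [← pow_add, hexp, pow_add, mul_assoc, ← mul_pow, mul_inv_cancel₀ hq, one_pow, mul_one]
  calc q ^ (j ^ 2) * ((-1) ^ j * (q ^ (k ^ 2) * (-q⁻¹ ^ (2 * j)) ^ k))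
      = (-1) ^ j * (-1) ^ k * (q ^ (j ^ 2) * q ^ (k ^ 2) * q⁻¹ ^ (2 * j * k)) := by
        rw [neg_pow (q⁻¹ ^ (2 * j)), ← pow_mul]; ring
    _ = (-1) ^ d * q ^ (d ^ 2) := by rw [hsign, hpow]

theorem eval_partialThetaSection_neg_inv_pow {K : Type*} [Field K] {q : K} (hq : q ≠ 0)
    (j l : ℕ) :
    q ^ (j ^ 2) * ((-1) ^ j * (partialThetaSection q (j + l + 1)).eval (-q⁻¹ ^ (2 * j))) =
      1 + alternatingThetaSum q j + alternatingThetaSum q l := by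
  have hbelow : ∑ k ∈ Finset.range j, q ^ (j ^ 2) *
      ((-1) ^ j * (q ^ (k ^ 2) * (-q⁻¹ ^ (2 * j)) ^ k)) = alternatingThetaSum q j := by
    rw [alternatingThetaSum, ← Finset.sum_range_reflect]
    refine Finset.sum_congr rfl fun i hi => ?_
    have := Finset.mem_range.mp hi
    exact partialThetaSection_term_at_inv_pow hq (.inl (by omega))
  have habove : ∑ i ∈ Finset.range l, q ^ (j ^ 2) * ((-1) ^ j *
      (q ^ ((j + (i + 1)) ^ 2) * (-q⁻¹ ^ (2 * j)) ^ (j + (i + 1)))) = alternatingThetaSum q l :=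
    Finset.sum_congr rfl fun i _ => partialThetaSection_term_at_inv_pow hq (.inr rfl)
  have hmiddle := partialThetaSection_term_at_inv_pow hq (j := j) (k := j) (d := 0) (.inl rfl)
  rw [eval_partialThetaSection, Finset.mul_sum, Finset.mul_sum, add_assoc, Finset.sum_range_add,
    Finset.sum_range_succ', hbelow, habove, add_zero, hmiddle]
  ring

theorem neg_one_pow_mul_eval_partialThetaSection_pos (h0 : 0 < q) (h3 : 3 * q ^ 2 ≤ 1) {j l : ℕ}
    (hj : j ≠ 1) (hl : l ≠ 1) :
    0 < (-1) ^ j * (partialThetaSection q (j + l + 1)).eval (-q⁻¹ ^ (2 * j)) := by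
  have h := one_add_alternatingThetaSum_add_pos h0 h3 hj hl
  rw [← eval_partialThetaSection_neg_inv_pow h0.ne'] at h
  exact pos_of_mul_pos_right h (by positivity)

end AlternatingThetaSum

section RealZeros

variable {q : ℝ}

theorem eval_partialThetaSection_inv_pow_div {K : Type*} [Field K] {q x : K} (hq : q ≠ 0)
    (hx : x ≠ 0) (n : ℕ) :
    q ^ (n ^ 2) * x ^ n * (partialThetaSection q (n + 1)).eval (q⁻¹ ^ (2 * n) / x) =
      (partialThetaSection q (n + 1)).eval x := by
  simp only [eval_partialThetaSection]
  rw [← Finset.sum_range_reflect, Finset.mul_sum]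
  refine Finset.sum_congr rfl fun i hi => ?_
  obtain ⟨d, rfl⟩ := Nat.exists_eq_add_of_le (Finset.mem_range_succ_iff.mp hi)
  rw [show i + d + 1 - 1 - i = d by omega, div_pow, ← pow_mul, pow_add x, inv_pow]
  field_simp
  ring

theorem mul_inv_pow_two_mul_succ {K : Type*} [Field K] {q : K} (hq : q ≠ 0) (i : ℕ) :
    q * q⁻¹ ^ (2 * (i + 1)) = q⁻¹ * q⁻¹ ^ (2 * i) := by
  rw [mul_add_one, pow_add, sq, mul_left_comm, mul_inv_cancel_left₀ hq, mul_comm]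

variable {y : ℝ}

theorem eval_partialThetaSection_neg_inv_pow_div_pos (h0 : 0 < q) (hy : 0 < y) {n : ℕ}
    (hn : Odd n) (hneg : (partialThetaSection q (n + 1)).eval (-y) < 0) :
    0 < (partialThetaSection q (n + 1)).eval (-(q⁻¹ ^ (2 * n) / y)) := by
  have hodd : (-y) ^ n < 0 := hn.pow_neg (neg_neg_of_pos hy)
  rw [← eval_partialThetaSection_inv_pow_div h0.ne' (neg_ne_zero.mpr hy.ne') n, div_neg] at hneg
  exact pos_of_mul_neg_right hneg (mul_nonpos_of_nonneg_of_nonpos (by positivity) hodd.le)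

theorem inv_pow_div_mem_Ioo (h0 : 0 < q) (hy : y ∈ Set.Ioo q⁻¹ (q⁻¹ ^ 3)) (n : ℕ) :
    q⁻¹ ^ (2 * (n + 1)) / y ∈ Set.Ioo (q * q⁻¹ ^ (2 * n)) (q⁻¹ * q⁻¹ ^ (2 * n)) := by
  have hpos : 0 < y := (inv_pos.mpr h0).trans hy.1
  constructor
  · rw [lt_div_iff₀ hpos]
    calc q * q⁻¹ ^ (2 * n) * y < q * q⁻¹ ^ (2 * n) * q⁻¹ ^ 3 := by gcongr; exact hy.2
      _ = q * q⁻¹ ^ (2 * (n + 1)) * q⁻¹ := by ring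
      _ = q⁻¹ ^ (2 * (n + 1)) := by rw [mul_inv_pow_two_mul_succ h0.ne']; ring
  · rw [div_lt_iff₀ hpos]
    calc q⁻¹ ^ (2 * (n + 1)) = q⁻¹ * q⁻¹ ^ (2 * n) * q⁻¹ := by ring
      _ < q⁻¹ * q⁻¹ ^ (2 * n) * y := by gcongr; exact hy.1

theorem exists_mem_Ioo_neg_one_pow_mul_eval_partialThetaSection_pos (h0 : 0 < q) (h1 : q < 1)
    (hy : y ∈ Set.Ioo q⁻¹ (q⁻¹ ^ 3)) (hθ : partialTheta q (-y) ≤ 0) {m i : ℕ}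
    (hi : i ≤ 2 * m + 3) :
    ∃ t ∈ Set.Ioo (q * q⁻¹ ^ (2 * i)) (q⁻¹ * q⁻¹ ^ (2 * i)),
      0 < (-1) ^ i * (partialThetaSection q (2 * m + 3 + 1)).eval (-t) := by
  have hpos : 0 < y := (inv_pos.mpr h0).trans hy.1
  have hlt : q ^ 3 * y < 1 := by
    rw [← lt_div_iff₀' (by positivity), one_div, ← inv_pow]
    exact hy.2
  have hneg : (partialThetaSection q (2 * m + 3 + 1)).eval (-y) < 0 :=
    (eval_partialThetaSection_lt_partialTheta h0 h1 hpos (m := m + 2) (by omega)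
      hlt.le).trans_le hθ
  rcases eq_or_ne i 1 with rfl | hi1
  · refine ⟨y, ⟨?_, ?_⟩, by simpa using hneg⟩
    · calc q * q⁻¹ ^ (2 * 1) = q⁻¹ := by simpa using mul_inv_pow_two_mul_succ h0.ne' 0
        _ < y := hy.1
    · calc y < q⁻¹ ^ 3 := hy.2
        _ = q⁻¹ * q⁻¹ ^ (2 * 1) := by ring
  obtain ⟨l, hl⟩ := Nat.exists_eq_add_of_le hi
  rcases eq_or_ne l 1 with rfl | hl1
  · obtain rfl : i = 2 * m + 2 := by omega
    refine ⟨_, inv_pow_div_mem_Ioo h0 hy (2 * m + 2), ?_⟩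
    rw [Even.neg_one_pow ⟨m + 1, by ring⟩, one_mul]
    exact eval_partialThetaSection_neg_inv_pow_div_pos h0 hpos ⟨m + 1, by ring⟩ hneg
  · refine ⟨q⁻¹ ^ (2 * i), ⟨?_, ?_⟩, ?_⟩
    · exact mul_lt_of_lt_one_left (by positivity) h1
    · exact lt_mul_of_one_lt_left (by positivity) ((one_lt_inv₀ h0).mpr h1)
    · rw [hl]
      exact neg_one_pow_mul_eval_partialThetaSection_pos h0
        (three_mul_sq_le_one_of_partialTheta_neg_nonpos h0 h1 hpos hlt hθ) hi1 hl1

theorem splits_partialThetaSection (h0 : 0 < q) (h1 : q < 1)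
    (hy : y ∈ Set.Ioo q⁻¹ (q⁻¹ ^ 3)) (hθ : partialTheta q (-y) ≤ 0) (m : ℕ) :
    (partialThetaSection q (2 * m + 3 + 1)).Splits := by
  choose! t ht hsign using fun i (hi : i ≤ 2 * m + 3) =>
    exists_mem_Ioo_neg_one_pow_mul_eval_partialThetaSection_pos h0 h1 hy hθ hi
  refine splits_of_alternating (natDegree_partialThetaSection_succ_le q (2 * m + 3))
    (x := fun i => -t i) (strictAntiOn_Iic_of_succ_lt fun i hi => neg_lt_neg ?_) hsign
  calc t i < q⁻¹ * q⁻¹ ^ (2 * i) := (ht i (by omega)).2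
    _ = q * q⁻¹ ^ (2 * (i + 1)) := (mul_inv_pow_two_mul_succ h0.ne' i).symm
    _ < t (i + 1) := (ht (i + 1) (by omega)).1

theorem im_eq_zero_of_partialTheta_eq_zero (h0 : 0 < q) (h1 : q < 1)
    (hy : y ∈ Set.Ioo q⁻¹ (q⁻¹ ^ 3)) (hθ : partialTheta q (-y) ≤ 0) {z : ℂ}
    (hz : partialTheta (q : ℂ) z = 0) : z.im = 0 := by
  have hq : ‖(q : ℂ)‖ < 1 := by rwa [Complex.norm_real, Real.norm_of_nonneg h0.le]
  have hne : partialTheta (q : ℂ) ≠ 0 := fun h => by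
    simpa [partialTheta_zero_right] using congr_fun h 0
  refine im_eq_zero_of_tendsto_aeval_of_splits (splits_partialThetaSection h0 h1 hy hθ)
    (differentiable_partialTheta hq) hne (l := atTop) (fun w => ?_) hz
  simp only [aeval_partialThetaSection]
  exact (tendsto_eval_partialThetaSection hq w).comp
    (tendsto_atTop_mono (fun m => by dsimp; omega) tendsto_id)

theorem pow_three_mul_le_one_of_zeros_le (h0 : 0 < q) (h1 : q < 1) {r : ℝ} (hr : 0 < r)
    (hzeros : ∀ z : ℂ, partialTheta (q : ℂ) z = 0 → z.im = 0 ∧ z.re ≤ -r) : q ^ 3 * r ≤ 1 := by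
  have hq : ‖(q : ℂ)‖ < 1 := by rwa [Complex.norm_real, Real.norm_of_nonneg h0.le]
  obtain ⟨hpow₁₂, hpow₂₃⟩ := powerSum_inequalities_of_zeros_le (differentiable_partialTheta hq)
    (partialTheta_zero_right _) (fun _ => norm_partialTheta_le hq) hr hzeros
    (c := fun k => q ^ (k ^ 2)) fun k => by
      rw [iteratedDeriv_partialTheta_zero hq,
        mul_div_cancel_left₀ _ (Nat.cast_ne_zero.mpr k.factorial_ne_zero)]
      norm_cast
  norm_num at hpow₁₂ hpow₂₃
  have hq2 : q ^ 2 < 1 := pow_lt_one₀ h0.le h1 two_ne_zero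
  have h3 : 0 ≤ 1 - 3 * q ^ 2 := by
    refine nonneg_of_mul_nonneg_right (a := q ^ 6 * (1 - q ^ 2)) ?_
      (mul_pos (by positivity) (by linarith))
    linarith
  have hr2 : q ^ 3 * r * (1 - 2 * q ^ 2) ≤ 1 * (1 - 2 * q ^ 2) := by
    linarith [mul_le_mul_of_nonneg_left hpow₁₂ h0.le]
  exact le_of_mul_le_mul_right hr2 (by linarith)

theorem exists_partialTheta_neg_nonpos (h0 : 0 < q) (h1 : q < 1)
    (hreal : ∀ z : ℂ, partialTheta (q : ℂ) z = 0 → z.im = 0) :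
    ∃ y ∈ Set.Ioo q⁻¹ (q⁻¹ ^ 3), partialTheta q (-y) ≤ 0 := by
  by_contra! hpos
  have hq3 : q ^ 3 * q⁻¹ ^ 3 = 1 := by rw [← mul_pow, mul_inv_cancel₀ h0.ne', one_pow]
  have hcont : Continuous fun y => partialTheta q (-y) :=
    (differentiable_partialTheta (by rwa [Real.norm_of_nonneg h0.le])).continuous.comp
      continuous_neg
  obtain ⟨ε, hε, hball⟩ := Metric.eventually_nhds_iff.mp
    ((hcont.tendsto (q⁻¹ ^ 3)).eventually_const_lt
      (partialTheta_neg_pos_of_pow_three_mul_eq_one h0 h1 hq3))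
  have hposε : ∀ y < q⁻¹ ^ 3 + ε, 0 < partialTheta q (-y) := fun y hy => by
    rcases le_or_gt y 0 with hy0 | hy0
    · exact partialTheta_pos_of_nonneg h0 h1 (neg_nonneg.mpr hy0)
    rcases le_or_gt (q * y) 1 with hqy | hqy
    · exact partialTheta_neg_pos_of_mul_le_one h0 h1 hy0 hqy
    rcases lt_or_ge y (q⁻¹ ^ 3) with hy3 | hy3
    · exact hpos y ⟨(inv_lt_iff_one_lt_mul₀' h0).mpr hqy, hy3⟩
    · exact hball (by rw [Real.dist_eq, abs_of_nonneg] <;> linarith)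
  have hle := pow_three_mul_le_one_of_zeros_le h0 h1 (r := q⁻¹ ^ 3 + ε) (by positivity)
    fun z hz => ⟨hreal z hz, le_of_not_gt fun hlt => ?_⟩
  · have : 0 < q ^ 3 * ε := by positivity
    linarith
  · rw [Complex.ext (z := z) (w := z.re) rfl (hreal z hz), partialTheta_ofReal,
      Complex.ofReal_eq_zero] at hz
    have := hposε (-z.re) (by linarith)
    rw [neg_neg] at this
    exact this.ne' hz

end RealZeros

end PartialTheta

theorem stmt7 (a : ℝ) (ha : 1 < a) :
    (∀ z : ℂ, (∑' k : ℕ, (a : ℂ) ^ (-(k ^ 2 : ℤ)) * z ^ k) = 0 → z.im = 0) ↔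
      ∃ x : ℝ, x ∈ Set.Ioo (-a ^ 3) (-a) ∧
        (∑' k : ℕ, a ^ (-(k ^ 2 : ℤ)) * x ^ k) ≤ 0 := by
  have h0 : 0 < a⁻¹ := inv_pos.mpr (one_pos.trans ha)
  have h1 : a⁻¹ < 1 := inv_lt_one_of_one_lt₀ ha
  simp only [PartialTheta.tsum_zpow_neg_sq_mul_pow, ← Complex.ofReal_inv]
  constructor
  · intro hreal
    obtain ⟨y, hy, hθ⟩ := PartialTheta.exists_partialTheta_neg_nonpos h0 h1 hreal
    rw [inv_inv] at hy
    exact ⟨-y, ⟨neg_lt_neg hy.2, neg_lt_neg hy.1⟩, hθ⟩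
  · rintro ⟨x, ⟨hx3, hx1⟩, hθ⟩ z hz
    refine PartialTheta.im_eq_zero_of_partialTheta_eq_zero h0 h1 (y := -x) ?_ ?_ hz
    · rw [inv_inv]
      exact ⟨lt_neg_of_lt_neg hx1, neg_lt_of_neg_lt hx3⟩
    · rwa [neg_neg]
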